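/- Let d ≥ 2 and r₀ > 1/2. There exists a constant C depending only on d and r₀ such that for every v ∈ ℝ^d: ∫_{S^{d−1}} (1 + (ω · v)²)^{−r₀} dσ(ω) ≤ C ⟨v⟩^{−1}, where σ is the surface measure on the unit sphere S^{d−1} ⊂ ℝ^d. -/

import Mathlib

/-!
The proof replaces the sphere by the unit ball. Since `a ↦ (1 + a²)^{-r₀}` is even and decreasing
in `|a|`, and `|rω · v| ≤ |ω · v|` for `0 < r < 1`, polar coordinates give
`∫_{S^{d-1}} f(ω · v) dσ(ω) ≤ d ∫_{|x| < 1} f(x · v) dx` (`lintegral_sphere_le`); this avoids the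
marginal density of `σ`, which is singular when `d = 2`.

Choose a coordinate `i` with `|v| ≤ √d |v_i|`. The ball lies in the cube `[-1, 1]^d`, and for fixed
other coordinates the integral over `x_i`, extended to all of `ℝ`, is at most
`|v_i|⁻¹ ∫_ℝ f` by translation and scaling (`lintegral_bracket_affine`); this is finite because
`r₀ > 1/2`. So the ball integral is `O(|v_i|⁻¹)` (`lintegral_ball_le`), which is the claim for
`|v| ≥ 1`. For `|v| ≤ 1` the total mass of `σ` is a sufficient bound.
-/

open MeasureTheory
open scoped InnerProductSpace

/-- The Japanese bracket `⟨v⟩ = (1 + |v|²)^{1/2}`. -/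
noncomputable def jap {d : ℕ} (v : EuclideanSpace ℝ (Fin d)) : ℝ :=
  Real.sqrt (1 + ‖v‖ ^ 2)

/-- The profile `a ↦ (1 + a²)^{-r}` with values in `[0, ∞]`. -/
noncomputable def bracketPow (r : ℝ) (a : ℝ) : ENNReal := ENNReal.ofReal ((1 + a ^ 2) ^ (-r))

lemma measurable_bracketPow (r : ℝ) : Measurable (bracketPow r) := by
  unfold bracketPow
  fun_prop

lemma bracketPow_anti {r : ℝ} (hr : 0 ≤ r) {a b : ℝ} (h : |a| ≤ |b|) :
    bracketPow r b ≤ bracketPow r a := by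
  unfold bracketPow
  apply ENNReal.ofReal_le_ofReal
  have := sq_le_sq.mpr h
  exact Real.rpow_le_rpow_of_nonpos (by positivity) (by linarith) (by linarith)

lemma lintegral_bracket_affine {r : ℝ} (hr : 1 / 2 < r) {a : ℝ} (ha : a ≠ 0) (b : ℝ) :
    ∫⁻ t : ℝ, bracketPow r (a * t + b) =
      ENNReal.ofReal (|a|⁻¹ * ∫ t : ℝ, (1 + t ^ 2) ^ (-r)) := by
  have hint : Integrable (fun t : ℝ => (1 + t ^ 2) ^ (-r)) := by
    have h := integrable_rpow_neg_one_add_norm_sq (E := ℝ) (μ := volume) (r := 2 * r)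
      (by simp; linarith)
    refine h.congr (Filter.Eventually.of_forall fun t => ?_)
    simp only [Real.norm_eq_abs, sq_abs]
    congr 1
    ring
  have htrans : ∀ t : ℝ, a * t + b = a * (t + b / a) := fun t => by field_simp
  simp_rw [htrans]
  rw [lintegral_add_right_eq_self (fun t => bracketPow r (a * t)) (b / a)]
  unfold bracketPow
  rw [← ofReal_integral_eq_lintegral_ofReal (hint.comp_mul_left' ha)
    (Filter.Eventually.of_forall fun t => by positivity),
    Measure.integral_comp_mul_left (fun t : ℝ => (1 + t ^ 2) ^ (-r)) a, abs_inv, smul_eq_mul]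

/-- The ball integral is controlled by any nonzero coordinate of `v`: integrate that coordinate
over `ℝ` and the others over `[-1, 1]`. -/
lemma lintegral_ball_le {n : ℕ} {r : ℝ} (hr : 1 / 2 < r) (v : EuclideanSpace ℝ (Fin (n + 1)))
    (i : Fin (n + 1)) (hi : v i ≠ 0) :
    ∫⁻ x in Metric.ball (0 : EuclideanSpace ℝ (Fin (n + 1))) 1, bracketPow r ⟪x, v⟫_ℝ ≤
      ENNReal.ofReal (2 ^ n * (|v i|⁻¹ * ∫ t : ℝ, (1 + t ^ 2) ^ (-r))) := by
  let box : Set (Fin n → ℝ) := Set.Icc (fun _ => -1) (fun _ => 1)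
  have hbox : MeasurableSet box := measurableSet_Icc
  let Q : ℝ × (Fin n → ℝ) → ENNReal := fun p =>
    box.indicator 1 p.2 * bracketPow r (v i * p.1 + ∑ j, p.2 j * v (i.succAbove j))
  have hQ : Measurable Q := by
    refine Measurable.mul ((measurable_one.indicator hbox).comp measurable_snd) ?_
    exact (measurable_bracketPow r).comp (by fun_prop)
  have hmp := (volume_preserving_piFinSuccAbove (fun _ : Fin (n + 1) => ℝ) i).comp
    (PiLp.volume_preserving_ofLp (Fin (n + 1)))
  calc _ ≤ ∫⁻ x : EuclideanSpace ℝ (Fin (n + 1)),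
        Q ((MeasurableEquiv.piFinSuccAbove (fun _ : Fin (n + 1) => ℝ) i ∘ WithLp.ofLp) x) := by
        rw [← lintegral_indicator Metric.isOpen_ball.measurableSet]
        refine lintegral_mono fun x => ?_
        by_cases hx : x ∈ Metric.ball (0 : EuclideanSpace ℝ (Fin (n + 1))) 1
        swap
        · simp [Set.indicator_of_notMem hx]
        rw [Set.indicator_of_mem hx]
        have hx1 : ‖x‖ ≤ 1 := (mem_ball_zero_iff.mp hx).le
        have hmem : (fun j => x (i.succAbove j)) ∈ box := by
          have h : ∀ k, |x k| ≤ 1 := fun k => (PiLp.norm_apply_le x k).trans hx1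
          exact ⟨fun j => (abs_le.mp (h _)).1, fun j => (abs_le.mp (h _)).2⟩
        have hin : ⟪x, v⟫_ℝ = v i * x i + ∑ j, x (i.succAbove j) * v (i.succAbove j) := by
          rw [PiLp.inner_apply, Fin.sum_univ_succAbove _ i]
          simp [mul_comm]
        change _ ≤ box.indicator 1 (fun j => x (i.succAbove j)) *
          bracketPow r (v i * x i + ∑ j, x (i.succAbove j) * v (i.succAbove j))
        rw [Set.indicator_of_mem hmem, hin]
        simp
    _ = ∫⁻ p, Q p := hmp.lintegral_comp hQ
    _ = ∫⁻ y, ∫⁻ t, Q (t, y) := lintegral_prod_symm _ hQ.aemeasurable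
    _ = ∫⁻ y, box.indicator 1 y *
          ENNReal.ofReal (|v i|⁻¹ * ∫ t : ℝ, (1 + t ^ 2) ^ (-r)) := by
        refine lintegral_congr fun y => ?_
        simp only [Q]
        have hm : Measurable fun t : ℝ =>
            bracketPow r (v i * t + ∑ j, y j * v (i.succAbove j)) :=
          (measurable_bracketPow r).comp (by fun_prop)
        rw [lintegral_const_mul _ hm, lintegral_bracket_affine hr hi]
    _ = _ := by
        rw [lintegral_mul_const _ (measurable_one.indicator hbox), lintegral_indicator_one hbox,
          Real.volume_Icc_pi, ENNReal.ofReal_mul (p := 2 ^ n) (by positivity)]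
        congr 1
        simp only [Finset.prod_const, Finset.card_univ, Fintype.card_fin]
        rw [ENNReal.ofReal_pow (by norm_num)]
        norm_num

/-- Comparison of the sphere with the ball: `f(ω · v) ≤ f(rω · v)` for `r < 1`, and averaging over
`r` against `r^{d-1} dr` turns the right-hand side into a ball integral. -/
lemma lintegral_sphere_le {n : ℕ} {r : ℝ} (hr : 0 ≤ r) (v : EuclideanSpace ℝ (Fin (n + 1))) :
    ∫⁻ ω : Metric.sphere (0 : EuclideanSpace ℝ (Fin (n + 1))) 1,
        bracketPow r ⟪(ω : EuclideanSpace ℝ (Fin (n + 1))), v⟫_ℝ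
        ∂((volume : Measure (EuclideanSpace ℝ (Fin (n + 1)))).toSphere) ≤
      (n + 1) * ∫⁻ x in Metric.ball (0 : EuclideanSpace ℝ (Fin (n + 1))) 1,
        bracketPow r ⟪x, v⟫_ℝ := by
  let one : Set.Ioi (0 : ℝ) := ⟨1, by simp⟩
  let F : Metric.sphere (0 : EuclideanSpace ℝ (Fin (n + 1))) 1 → ENNReal := fun ω =>
    bracketPow r ⟪(ω : EuclideanSpace ℝ (Fin (n + 1))), v⟫_ℝ
  have hF : Measurable F := (measurable_bracketPow r).comp (by fun_prop)
  let R : Set.Ioi (0 : ℝ) → ENNReal := (Set.Iio one).indicator 1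
  have hR : Measurable R := measurable_one.indicator measurableSet_Iio
  have hdim : Module.finrank ℝ (EuclideanSpace ℝ (Fin (n + 1))) - 1 = n := by simp
  have hmp := (volume : Measure (EuclideanSpace ℝ (Fin (n + 1)))).measurePreserving_homeomorphUnitSphereProd
  rw [hdim] at hmp
  have hmass : Measure.volumeIoiPow n (Set.Iio one) = ((n : ENNReal) + 1)⁻¹ := by
    rw [Measure.volumeIoiPow_apply_Iio]
    simp only [one, one_pow, one_div]
    rw [ENNReal.ofReal_inv_of_pos (by positivity), ENNReal.ofReal_add (by positivity) zero_le_one]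
    simp
  have key : (∫⁻ ω, F ω ∂(volume : Measure (EuclideanSpace ℝ (Fin (n + 1)))).toSphere) *
        ((n : ENNReal) + 1)⁻¹ ≤
      ∫⁻ x in Metric.ball (0 : EuclideanSpace ℝ (Fin (n + 1))) 1, bracketPow r ⟪x, v⟫_ℝ := by
    calc _ = ∫⁻ p, F p.1 * R p.2
            ∂((volume : Measure (EuclideanSpace ℝ (Fin (n + 1)))).toSphere.prod
              (Measure.volumeIoiPow n)) := by
          rw [lintegral_prod_mul hF.aemeasurable hR.aemeasurable,
            lintegral_indicator_one measurableSet_Iio, hmass]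
      _ = ∫⁻ x : ({0}ᶜ : Set (EuclideanSpace ℝ (Fin (n + 1)))), F (homeomorphUnitSphereProd _ x).1 *
            R (homeomorphUnitSphereProd _ x).2
              ∂((volume : Measure (EuclideanSpace ℝ (Fin (n + 1)))).comap (↑)) :=
          (hmp.lintegral_comp ((hF.comp measurable_fst).mul (hR.comp measurable_snd))).symm
      _ ≤ ∫⁻ x : ({0}ᶜ : Set (EuclideanSpace ℝ (Fin (n + 1)))),
            (Metric.ball (0 : EuclideanSpace ℝ (Fin (n + 1))) 1).indicator
            (fun x => bracketPow r ⟪x, v⟫_ℝ) x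
              ∂((volume : Measure (EuclideanSpace ℝ (Fin (n + 1)))).comap (↑)) := by
          refine lintegral_mono fun x => ?_
          by_cases hx : ‖(x : EuclideanSpace ℝ (Fin (n + 1)))‖ < 1
          · have hx0 : 0 < ‖(x : EuclideanSpace ℝ (Fin (n + 1)))‖ := norm_pos_iff.mpr x.2
            have h1 : (homeomorphUnitSphereProd _ x).2 ∈ Set.Iio one := by
              rw [Set.mem_Iio, ← Subtype.coe_lt_coe]
              simpa [one] using hx
            simp only [R, F]
            rw [Set.indicator_of_mem h1, Set.indicator_of_mem (mem_ball_zero_iff.mpr hx)]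
            simp only [Pi.one_apply, mul_one]
            apply bracketPow_anti hr
            rw [homeomorphUnitSphereProd_apply_fst_coe, real_inner_smul_left, abs_mul, abs_inv,
              abs_norm]
            exact le_mul_of_one_le_left (abs_nonneg _) ((one_le_inv₀ hx0).mpr hx.le)
          · have h1 : (homeomorphUnitSphereProd _ x).2 ∉ Set.Iio one := by
              rw [Set.mem_Iio, ← Subtype.coe_lt_coe]
              simpa [one] using hx
            simp [R, Set.indicator_of_notMem h1]
      _ = ∫⁻ x in ({0}ᶜ : Set (EuclideanSpace ℝ (Fin (n + 1)))),
            (Metric.ball (0 : EuclideanSpace ℝ (Fin (n + 1))) 1).indicator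
            (fun x => bracketPow r ⟪x, v⟫_ℝ) x :=
          lintegral_subtype_comap (measurableSet_singleton _).compl _
      _ ≤ ∫⁻ x, (Metric.ball (0 : EuclideanSpace ℝ (Fin (n + 1))) 1).indicator
            (fun x => bracketPow r ⟪x, v⟫_ℝ) x :=
          setLIntegral_le_lintegral _ _
      _ = _ := lintegral_indicator Metric.isOpen_ball.measurableSet _
  rw [← div_eq_mul_inv] at key
  rw [mul_comm]
  exact (ENNReal.div_le_iff (by simp) (by simp)).mp key

/-- Some coordinate satisfies `|v| ≤ √d |v_i|`. -/
lemma exists_coord_norm_sq_le {n : ℕ} (v : EuclideanSpace ℝ (Fin (n + 1))) :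
    ∃ i, ‖v‖ ^ 2 ≤ (n + 1) * v i ^ 2 := by
  obtain ⟨i, -, hi⟩ := Finset.exists_max_image Finset.univ (fun i => v i ^ 2) Finset.univ_nonempty
  refine ⟨i, ?_⟩
  rw [EuclideanSpace.real_norm_sq_eq]
  refine (Finset.sum_le_card_nsmul _ _ _ hi).trans ?_
  simp

/-- **Angular averaging estimate:** for `d ≥ 2` and `r₀ > 1/2` there is a constant
`C`, depending only on `d` and `r₀`, such that for every `v ∈ ℝ^d`,
`∫_{S^{d-1}} (1 + (ω·v)²)^{-r₀} dσ(ω) ≤ C ⟨v⟩⁻¹`, where `σ` is the surface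
measure on the unit sphere. -/
theorem sphere_average_estimate (d : ℕ) (hd : 2 ≤ d) (r₀ : ℝ) (hr₀ : 1 / 2 < r₀) :
    ∃ C : ℝ, ∀ v : EuclideanSpace ℝ (Fin d),
      (∫ ω : Metric.sphere (0 : EuclideanSpace ℝ (Fin d)) 1,
          (1 + ⟪(ω : EuclideanSpace ℝ (Fin d)), v⟫_ℝ ^ 2) ^ (-r₀)
          ∂((volume : Measure (EuclideanSpace ℝ (Fin d))).toSphere))
        ≤ C * (jap v)⁻¹ := by
  obtain ⟨n, rfl⟩ : ∃ n, d = n + 1 := ⟨d - 1, by omega⟩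
  set σ := (volume : Measure (EuclideanSpace ℝ (Fin (n + 1)))).toSphere
  set K : ℝ := ∫ t : ℝ, (1 + t ^ 2) ^ (-r₀)
  have hK : 0 ≤ K := integral_nonneg fun t => by positivity
  set A : ℝ := σ.real Set.univ
  have hA : 0 ≤ A := measureReal_nonneg
  set B : ℝ := (n + 1) * (2 ^ n * K) with hBdef
  have hB : 0 ≤ B := by positivity
  refine ⟨√2 * A + √(2 * (n + 1)) * B, fun v => ?_⟩
  have hjpos : 0 < jap v := Real.sqrt_pos.mpr (by positivity)
  have hlin : (∫ ω : Metric.sphere (0 : EuclideanSpace ℝ (Fin (n + 1))) 1,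
      (1 + ⟪(ω : EuclideanSpace ℝ (Fin (n + 1))), v⟫_ℝ ^ 2) ^ (-r₀) ∂σ) =
      (∫⁻ ω : Metric.sphere (0 : EuclideanSpace ℝ (Fin (n + 1))) 1,
        bracketPow r₀ ⟪(ω : EuclideanSpace ℝ (Fin (n + 1))), v⟫_ℝ ∂σ).toReal := by
    refine integral_eq_lintegral_of_nonneg_ae
      (Filter.Eventually.of_forall fun ω => by positivity) ?_
    exact Measurable.aestronglyMeasurable (by fun_prop)
  rw [hlin, ← div_eq_mul_inv, le_div_iff₀ hjpos]
  rcases le_or_gt ‖v‖ 1 with hv | hv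
  · have hj : jap v ≤ √2 := Real.sqrt_le_sqrt (by nlinarith [norm_nonneg v])
    have h1 : (∫⁻ ω : Metric.sphere (0 : EuclideanSpace ℝ (Fin (n + 1))) 1,
        bracketPow r₀ ⟪(ω : EuclideanSpace ℝ (Fin (n + 1))), v⟫_ℝ ∂σ).toReal ≤ A := by
      refine ENNReal.toReal_mono (measure_ne_top σ Set.univ) ?_
      rw [← lintegral_one]
      refine lintegral_mono fun ω => ?_
      refine (bracketPow_anti (by linarith) (a := 0) (by simp)).trans ?_
      simp [bracketPow]
    calc _ ≤ A * √2 := mul_le_mul h1 hj hjpos.le hA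
      _ ≤ _ := by
        have : 0 ≤ √(2 * ((n : ℝ) + 1)) * B := by positivity
        linarith
  · obtain ⟨i, hi⟩ := exists_coord_norm_sq_le v
    have hvi : v i ≠ 0 := by
      intro h
      rw [h] at hi
      nlinarith
    have hj : jap v ≤ √(2 * (n + 1)) * |v i| := by
      rw [← Real.sqrt_sq_eq_abs, ← Real.sqrt_mul (by positivity)]
      exact Real.sqrt_le_sqrt (by nlinarith)
    have h1 : (∫⁻ ω : Metric.sphere (0 : EuclideanSpace ℝ (Fin (n + 1))) 1,
        bracketPow r₀ ⟪(ω : EuclideanSpace ℝ (Fin (n + 1))), v⟫_ℝ ∂σ).toReal ≤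
          B * |v i|⁻¹ := by
      refine ENNReal.toReal_le_of_le_ofReal (by positivity) ?_
      refine (lintegral_sphere_le (by linarith) v).trans ?_
      refine (mul_le_mul_right (lintegral_ball_le hr₀ v i hvi) _).trans_eq ?_
      have hn : ((n : ENNReal) + 1) = ENNReal.ofReal ((n : ℝ) + 1) := by
        rw [ENNReal.ofReal_add (by positivity) zero_le_one]
        simp
      rw [hn, ← ENNReal.ofReal_mul (by positivity)]
      congr 1
      rw [hBdef]
      ring
    calc _ ≤ (B * |v i|⁻¹) * (√(2 * (n + 1)) * |v i|) :=
          mul_le_mul h1 hj hjpos.le (by positivity)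
      _ = √(2 * (n + 1)) * B := by
        have : |v i| ≠ 0 := abs_ne_zero.mpr hvi
        field_simp
      _ ≤ _ := by
        have : 0 ≤ √2 * A := by positivity
        linarith
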